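/- Let c : ℤ^d → ℤ be a sparse configuration that has a non-trivial annihilator (a nonzero polynomial f with fc = 0). Then c is a finite sum of periodic fibers, i.e., c = e_1 + … + e_r where each e_j is a periodic v_j-fiber for some nonzero v_j ∈ ℤ^d. -/

import Mathlib

namespace PaperFormal

/-- View an integer vector inside `ℝ^d`. -/
def intVecR {d : ℕ} (u : Fin d → ℤ) : Fin d → ℝ := fun i => (u i : ℝ)

/-- View an integer vector inside `ℚ^d`. -/
def intVecQ {d : ℕ} (u : Fin d → ℤ) : Fin d → ℚ := fun i => (u i : ℚ)

/-- A (Laurent) polynomial: a finitely supported integer-valued function on `ℤ^d`. -/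
def IsPoly {d : ℕ} (f : (Fin d → ℤ) → ℤ) : Prop := (Function.support f).Finite

/-- The product `(fc)(u) = ∑_v f(v) · c(u − v)` of a polynomial `f` with `c : ℤ^d → ℤ`. -/
noncomputable def polyApply {d : ℕ} (f : (Fin d → ℤ) → ℤ) (c : (Fin d → ℤ) → ℤ) :
    (Fin d → ℤ) → ℤ := fun u => ∑ᶠ v, f v * c (u - v)

/-- The product `(fc)(u) = ∑_v f(v) · c(u − v)` of a polynomial `f` with `c : ℤ^d → ℂ`. -/
noncomputable def polyApplyC {d : ℕ} (f : (Fin d → ℤ) → ℤ) (c : (Fin d → ℤ) → ℂ) :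
    (Fin d → ℤ) → ℂ := fun u => ∑ᶠ v, (f v : ℂ) * c (u - v)

/-- `c` is `v`-periodic: `c(u + v) = c(u)` for all `u`. -/
def Periodic {d : ℕ} (c : (Fin d → ℤ) → ℤ) (v : Fin d → ℤ) : Prop := ∀ u, c (u + v) = c u

/-- `c : ℤ^d → ℂ` is `v`-periodic. -/
def PeriodicC {d : ℕ} (c : (Fin d → ℤ) → ℂ) (v : Fin d → ℤ) : Prop := ∀ u, c (u + v) = c u

/-- `c` is `k`-periodic: it has `k` periods that are linearly independent over `ℚ`. -/
def KPeriodic {d : ℕ} (k : ℕ) (c : (Fin d → ℤ) → ℤ) : Prop :=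
  ∃ v : Fin k → (Fin d → ℤ),
    (LinearIndependent ℚ fun i => intVecQ (v i)) ∧ ∀ i, Periodic c (v i)

/-- `c` is strongly periodic: it is `d`-periodic. -/
def StronglyPeriodic {d : ℕ} (c : (Fin d → ℤ) → ℤ) : Prop := KPeriodic d c

/-- `c : ℤ^d → ℂ` is strongly periodic. -/
def StronglyPeriodicC {d : ℕ} (c : (Fin d → ℤ) → ℂ) : Prop :=
  ∃ v : Fin d → (Fin d → ℤ),
    (LinearIndependent ℚ fun i => intVecQ (v i)) ∧ ∀ i, PeriodicC c (v i)

/-- Two nonzero integer vectors are non-parallel if they are linearly independent over `ℚ`. -/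
def NonParallel {d : ℕ} (v w : Fin d → ℤ) : Prop :=
  LinearIndependent ℚ ![intVecQ v, intVecQ w]

/-- A line polynomial in direction `v`: a polynomial whose support contains at least two points
and is contained in `u + ℚv` for some `u ∈ ℤ^d`. -/
def IsLinePoly {d : ℕ} (f : (Fin d → ℤ) → ℤ) (v : Fin d → ℤ) : Prop :=
  IsPoly f ∧ v ≠ 0 ∧ 2 ≤ (Function.support f).ncard ∧
    ∃ u : Fin d → ℤ, ∀ w ∈ Function.support f, ∃ q : ℚ, intVecQ w = intVecQ u + q • intVecQ v

/-- The difference polynomial `X^v − 1`: value `1` at `v`, value `−1` at `0`, and `0` elsewhere. -/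
def diffPoly {d : ℕ} (v : Fin d → ℤ) : (Fin d → ℤ) → ℤ :=
  fun u => if u = v then 1 else if u = 0 then -1 else 0

/-- `c : ℤ^d → ℂ` is periodic in direction `v`: it is `kv`-periodic for some nonzero integer `k`. -/
def PeriodicInDirC {d : ℕ} (c : (Fin d → ℤ) → ℂ) (v : Fin d → ℤ) : Prop :=
  ∃ k : ℤ, k ≠ 0 ∧ PeriodicC c (k • v)

/-- `c : ℤ^d → ℂ` is `V`-periodic for a linear subspace `V ⊆ ℝ^d`: it is periodic in
direction `v` for every nonzero integer vector `v` lying in `V`. -/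
def VPeriodicC {d : ℕ} (V : Submodule ℝ (Fin d → ℝ)) (c : (Fin d → ℤ) → ℂ) : Prop :=
  ∀ v : Fin d → ℤ, v ≠ 0 → intVecR v ∈ V → PeriodicInDirC c v

/-- The discrete cube `C_m + t`. -/
def cube {d : ℕ} (m : ℕ) (t : Fin d → ℤ) : Set (Fin d → ℤ) :=
  {u | ∀ i, |u i - t i| ≤ (m : ℤ)}

/-- `c : ℤ^d → ℤ` is sparse: for some positive integer `a`,
`|supp(c) ∩ (C_m + t)| ≤ a·m` for all positive `m` and all `t`. -/
def Sparse {d : ℕ} (c : (Fin d → ℤ) → ℤ) : Prop :=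
  ∃ a : ℕ, 0 < a ∧ ∀ m : ℕ, 0 < m → ∀ t : Fin d → ℤ,
    (Function.support c ∩ cube m t).ncard ≤ a * m

/-- A `v`-fiber: a function whose support is contained in `w + ℚv` for some `w ∈ ℤ^d`. -/
def IsFiber {d : ℕ} (e : (Fin d → ℤ) → ℤ) (v : Fin d → ℤ) : Prop :=
  ∃ w : Fin d → ℤ, ∀ x ∈ Function.support e, ∃ q : ℚ, intVecQ x = intVecQ w + q • intVecQ v

/-- `c` is a sum of finitely many periodic `v`-fibers. -/
def FinSumPeriodicFibers {d : ℕ} (v : Fin d → ℤ) (c : (Fin d → ℤ) → ℤ) : Prop :=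
  ∃ (r : ℕ) (e : Fin r → ((Fin d → ℤ) → ℤ)), c = ∑ j, e j ∧
    ∀ j, IsFiber (e j) v ∧ ∃ w : Fin d → ℤ, w ≠ 0 ∧ Periodic (e j) w

end PaperFormal

namespace PaperFormal

section Algebra

variable {G : Type*} [AddCommGroup G]

/-- The shift operator `(T v c)(x) = c (x - v)`. -/
def shiftOp (v : G) : Module.End ℤ (G → ℤ) where
  toFun c := fun x => c (x - v)
  map_add' _ _ := rfl
  map_smul' _ _ := rfl

/-- The shift operators as a monoid homomorphism. -/
def shiftHom : Multiplicative G →* Module.End ℤ (G → ℤ) where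
  toFun v := shiftOp v.toAdd
  map_one' := by
    ext c x
    simp [shiftOp]
  map_mul' u v := by
    ext c x
    simp [shiftOp, sub_sub]

/-- The action of Laurent polynomials on functions. -/
noncomputable def act : AddMonoidAlgebra ℤ G →ₐ[ℤ] Module.End ℤ (G → ℤ) :=
  AddMonoidAlgebra.lift ℤ (Module.End ℤ (G → ℤ)) G shiftHom

/-- Monomials. -/
noncomputable def mon (v : G) : AddMonoidAlgebra ℤ G := AddMonoidAlgebra.single v 1

lemma act_single (v : G) (a : ℤ) (c : G → ℤ) (x : G) :
    act (AddMonoidAlgebra.single v a) c x = a * c (x - v) := by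
  simp [act, shiftHom, shiftOp]

lemma act_mon (v : G) (c : G → ℤ) (x : G) : act (mon v) c x = c (x - v) := by
  simp [mon, act_single]

lemma act_mon_sub_one (v : G) (c : G → ℤ) (x : G) :
    act (mon v - 1) c x = c (x - v) - c x := by
  simp [act_mon]

lemma act_mul (p q : AddMonoidAlgebra ℤ G) (c : G → ℤ) : act (p * q) c = act p (act q c) := by
  simp

lemma mon_add (u v : G) : mon (u + v) = mon u * mon v := by
  simp [mon, AddMonoidAlgebra.single_mul_single]

lemma mon_zero : mon (0 : G) = 1 := rfl

lemma mon_nsmul (n : ℕ) (v : G) : mon (n • v) = mon v ^ n := by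
  simp [mon, AddMonoidAlgebra.single_pow]

/-- `f(X^n)`. -/
noncomputable def pol (S : Finset G) (F : G → ℤ) (n : ℕ) : AddMonoidAlgebra ℤ G :=
  ∑ v ∈ S, AddMonoidAlgebra.single (n • v) (F v)

lemma act_pol (S : Finset G) (F : G → ℤ) (n : ℕ) (c : G → ℤ) (x : G) :
    act (pol S F n) c x = ∑ v ∈ S, F v * c (x - n • v) := by
  simp [pol, act_single]

lemma pol_pow (S : Finset G) (F : G → ℤ) (n p : ℕ) (hp : p.Prime) :
    ∃ q, pol S F n ^ p = pol S F (p * n) + (p : AddMonoidAlgebra ℤ G) * q := by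
  classical
  induction S using Finset.induction_on with
  | empty => exact ⟨0, by simp [pol, hp.ne_zero]⟩
  | insert a S ha ih =>
    obtain ⟨q, hq⟩ := ih
    obtain ⟨r, hr⟩ := exists_add_pow_prime_eq hp (AddMonoidAlgebra.single (n • a) (F a)) (pol S F n)
    have h1 : (F a) ^ p ≡ F a [ZMOD p] := by
      have := Fact.mk hp
      rw [← ZMod.intCast_eq_intCast_iff]
      push_cast
      exact ZMod.pow_card _
    obtain ⟨k, hk⟩ := (Int.modEq_iff_dvd.1 h1.symm)
    have hk' : F a ^ p = F a + p * k := by linarith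
    have h2 : (AddMonoidAlgebra.single (n • a) (F a) : AddMonoidAlgebra ℤ G) ^ p =
        AddMonoidAlgebra.single ((p * n) • a) (F a) +
          (p : AddMonoidAlgebra ℤ G) * AddMonoidAlgebra.single ((p * n) • a) k := by
      rw [AddMonoidAlgebra.single_pow, hk', ← mul_smul, AddMonoidAlgebra.single_add]
      congr 1
      rw [← nsmul_eq_mul p (AddMonoidAlgebra.single ((p * n) • a) k), AddMonoidAlgebra.smul_single]
      simp
    refine ⟨AddMonoidAlgebra.single ((p * n) • a) k + q +
      (AddMonoidAlgebra.single (n • a) (F a)) * (pol S F n) * r, ?_⟩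
    have e : ∀ m, pol (insert a S) F m = AddMonoidAlgebra.single (m • a) (F a) + pol S F m := by
      intro m; simp [pol, Finset.sum_insert ha]
    rw [e, e, hr, h2, hq]
    ring

lemma pol_ann (S : Finset G) (F : G → ℤ) (c : G → ℤ) (B : ℤ) (hB : ∀ x, |c x| ≤ B)
    (h : act (pol S F 1) c = 0) (n : ℕ) (hn0 : n ≠ 0)
    (hn : ∀ p : ℕ, p.Prime → p ∣ n → (∑ v ∈ S, |F v|) * B < p) :
    act (pol S F n) c = 0 := by
  induction n using induction_on_primes with
  | zero =>
    exact absurd rfl hn0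
  | one => exact h
  | prime_mul p n hp ih =>
    have h1 := ih (right_ne_zero_of_mul hn0) (fun q hq hqn => hn q hq (hqn.mul_left p))
    obtain ⟨q, hq⟩ := pol_pow S F n p hp
    have h2 : act (pol S F n ^ p) c = 0 := by
      obtain ⟨k, rfl⟩ := Nat.exists_eq_succ_of_ne_zero hp.ne_zero
      rw [pow_succ, act_mul, h1, map_zero]
    have h3 := hn p hp (dvd_mul_right p n)
    funext x
    have h4 : act (pol S F (p * n)) c x = - (p * act q c x) := by
      rw [hq, map_add, LinearMap.add_apply, ← nsmul_eq_mul, map_nsmul] at h2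
      have := congrFun h2 x
      simp at this
      linarith
    have h5 : |act (pol S F (p * n)) c x| ≤ (∑ v ∈ S, |F v|) * B := by
      rw [act_pol, Finset.sum_mul]
      refine (Finset.abs_sum_le_sum_abs _ _).trans (Finset.sum_le_sum fun v _ => ?_)
      rw [abs_mul]
      exact mul_le_mul_of_nonneg_left (hB _) (abs_nonneg _)
    exact Int.eq_zero_of_abs_lt_dvd (m := p) ⟨-act q c x, by rw [h4]; ring⟩ (h5.trans_lt h3)

lemma exists_diff_ann (S : Finset G) (F : G → ℤ) (c : G → ℤ) (B : ℤ) (hB : ∀ x, |c x| ≤ B)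
    (h : act (pol S F 1) c = 0) (v0 : G) (hv0 : v0 ∈ S) (hF : F v0 ≠ 0)
    (htf : ∀ (n : ℕ) (v : G), n ≠ 0 → v ≠ 0 → n • v ≠ 0) :
    ∃ l : List G, (∀ v ∈ l, v ≠ 0) ∧ act ((l.map fun v => mon v - 1).prod) c = 0 := by
  classical
  set K := ((∑ v ∈ S, |F v|) * B).toNat with hK
  set r := K.factorial with hr
  have hr0 : r ≠ 0 := Nat.factorial_ne_zero _
  have hann : ∀ i : ℕ, act (pol S F (1 + i * r)) c = 0 := by
    intro i
    apply pol_ann S F c B hB h _ (by omega)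
    intro p hp hpd
    by_contra hcon
    push Not at hcon
    have hpK : p ≤ K := by omega
    have h1 : p ∣ r := hp.dvd_factorial.2 hpK
    have h2 : p ∣ 1 := (Nat.dvd_add_left (h1.mul_left i)).1 hpd
    exact hp.one_lt.ne' (Nat.dvd_one.1 h2)
  let P : Polynomial (AddMonoidAlgebra ℤ G) :=
    ∏ v ∈ S.erase v0, (Polynomial.X - Polynomial.C (mon (r • v)))
  have key : ∑ i ∈ Finset.range (P.natDegree + 1), P.coeff i * pol S F (1 + i * r)
      = AddMonoidAlgebra.single v0 (F v0) * ∏ v ∈ S.erase v0, (mon (r • v0) - mon (r • v)) := by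
    have e1 : ∀ i, pol S F (1 + i * r) =
        ∑ v ∈ S, AddMonoidAlgebra.single v (F v) * mon (r • v) ^ i := by
      intro i
      refine Finset.sum_congr rfl fun v _ => ?_
      rw [← mon_nsmul, mon, AddMonoidAlgebra.single_mul_single, mul_one, add_smul, one_smul,
        mul_smul]
    have e2 : ∀ w, P.eval w = ∏ v ∈ S.erase v0, (w - mon (r • v)) := by
      intro w
      simp [P, Polynomial.eval_prod]
    calc _ = ∑ v ∈ S, AddMonoidAlgebra.single v (F v) * P.eval (mon (r • v)) := by
          simp_rw [e1, Finset.mul_sum]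
          rw [Finset.sum_comm]
          refine Finset.sum_congr rfl fun v _ => ?_
          rw [Polynomial.eval_eq_sum_range, Finset.mul_sum]
          refine Finset.sum_congr rfl fun i _ => ?_
          ring
      _ = _ := by
          rw [Finset.sum_eq_single v0, e2]
          · intro v hv hne
            rw [e2, Finset.prod_eq_zero (Finset.mem_erase.2 ⟨hne, hv⟩) (sub_self _), mul_zero]
          · intro h; exact absurd hv0 h
  have h1 : act (∏ v ∈ S.erase v0, (mon (r • v0) - mon (r • v))) c = 0 := by
    have h2 : act (AddMonoidAlgebra.single v0 (F v0) *
        ∏ v ∈ S.erase v0, (mon (r • v0) - mon (r • v))) c = 0 := by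
      rw [← key, map_sum, LinearMap.sum_apply]
      refine Finset.sum_eq_zero fun i _ => ?_
      rw [act_mul, hann, map_zero]
    rw [act_mul] at h2
    funext x
    have h3 := congrFun h2 (x + v0)
    rw [act_single] at h3
    simpa [hF] using h3
  refine ⟨(S.erase v0).toList.map fun v => r • (v0 - v), ?_, ?_⟩
  · intro w hw
    simp only [List.mem_map, Finset.mem_toList, Finset.mem_erase] at hw
    obtain ⟨v, ⟨hv, -⟩, rfl⟩ := hw
    exact htf _ _ hr0 (sub_ne_zero.2 hv.symm)
  · have e3 : ∏ v ∈ S.erase v0, (mon (r • v0) - mon (r • v)) =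
        (∏ v ∈ S.erase v0, mon (r • v)) * ∏ v ∈ S.erase v0, (mon (r • (v0 - v)) - 1) := by
      rw [← Finset.prod_mul_distrib]
      refine Finset.prod_congr rfl fun v _ => ?_
      rw [mul_sub, ← mon_add, mul_one, ← smul_add, add_sub_cancel]
    have e4 : ∏ v ∈ S.erase v0, (mon (r • (v0 - v)) - 1) =
        (∏ v ∈ S.erase v0, mon (r • (-v))) * ∏ v ∈ S.erase v0, (mon (r • v0) - mon (r • v)) := by
      rw [e3, ← mul_assoc, ← Finset.prod_mul_distrib]
      have : ∀ v : G, mon (r • (-v)) * mon (r • v) = 1 := by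
        intro v
        rw [← mon_add, ← smul_add, neg_add_cancel, smul_zero, mon_zero]
      simp only [this, Finset.prod_const_one, one_mul]
    rw [List.map_map, show ((fun v => mon v - 1) ∘ fun v => r • (v0 - v)) =
      fun v : G => mon (r • (v0 - v)) - 1 from rfl, Finset.prod_map_toList, e4, act_mul, h1,
      map_zero]

end Algebra

end PaperFormal

namespace PaperFormal

section Geometry

variable {d : ℕ}

/-- The indicator function of the coset `w + ℤ v`. -/
noncomputable def ind (w v : Fin d → ℤ) : (Fin d → ℤ) → ℤ :=
  Set.indicator {x | ∃ k : ℤ, x = w + k • v} 1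

/-- Parallel vectors. -/
def Par (u v : Fin d → ℤ) : Prop := ∃ a b : ℤ, a ≠ 0 ∧ b ≠ 0 ∧ a • u = b • v

/-- The span of all coset indicators in directions parallel to a member of `l`. -/
def fibSpan (l : List (Fin d → ℤ)) : Submodule ℤ ((Fin d → ℤ) → ℤ) :=
  Submodule.span ℤ {g | ∃ w v, v ≠ 0 ∧ (∃ u ∈ l, Par v u) ∧ g = ind w v}

/-- Bounded functions. -/
def Bdd (c : (Fin d → ℤ) → ℤ) : Prop := ∃ B : ℤ, ∀ x, |c x| ≤ B

lemma Bdd.add {c e : (Fin d → ℤ) → ℤ} (hc : Bdd c) (he : Bdd e) : Bdd (c + e) := by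
  obtain ⟨B, hB⟩ := hc
  obtain ⟨C, hC⟩ := he
  exact ⟨B + C, fun x => (abs_add_le _ _).trans (add_le_add (hB x) (hC x))⟩

lemma Bdd.act {c : (Fin d → ℤ) → ℤ} (hc : Bdd c) (p : AddMonoidAlgebra ℤ (Fin d → ℤ)) :
    Bdd (PaperFormal.act p c) := by
  induction p using AddMonoidAlgebra.induction_linear with
  | zero => exact ⟨0, fun x => by simp⟩
  | add p q hp hq =>
    rw [map_add, LinearMap.add_apply]
    exact hp.add hq
  | single v a =>
    obtain ⟨B, hB⟩ := hc
    refine ⟨|a| * B, fun x => ?_⟩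
    rw [act_single, abs_mul]
    exact mul_le_mul_of_nonneg_left (hB _) (abs_nonneg _)

lemma cube_finite (m : ℕ) (t : Fin d → ℤ) : (cube m t).Finite := by
  refine (Set.finite_Icc (fun i => t i - m) (fun i => t i + m)).subset ?_
  intro u hu
  simp only [cube, Set.mem_ofPred_eq, abs_le] at hu
  exact ⟨fun i => by have := (hu i).1; simp only; linarith,
    fun i => by have := (hu i).2; simp only; linarith⟩

lemma Sparse.add {c e : (Fin d → ℤ) → ℤ} (hc : Sparse c) (he : Sparse e) : Sparse (c + e) := by
  obtain ⟨a, ha, hA⟩ := hc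
  obtain ⟨b, hb, hB⟩ := he
  refine ⟨a + b, by omega, fun m hm t => ?_⟩
  have hfin : (Function.support c ∩ cube m t ∪ Function.support e ∩ cube m t).Finite :=
    (cube_finite m t).subset (by rintro x (hx | hx) <;> exact hx.2)
  have hsub : Function.support (c + e) ∩ cube m t ⊆
      Function.support c ∩ cube m t ∪ Function.support e ∩ cube m t := by
    rw [← Set.union_inter_distrib_right]
    exact Set.inter_subset_inter_left _ (Function.support_add _ _)
  calc _ ≤ _ := Set.ncard_le_ncard hsub hfin
    _ ≤ _ := Set.ncard_union_le _ _
    _ ≤ a * m + b * m := add_le_add (hA m hm t) (hB m hm t)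
    _ = _ := by ring

lemma Sparse.smul {c : (Fin d → ℤ) → ℤ} (hc : Sparse c) (k : ℤ) : Sparse (k • c) := by
  obtain ⟨a, ha, hA⟩ := hc
  refine ⟨a, ha, fun m hm t => (Set.ncard_le_ncard ?_ ?_).trans (hA m hm t)⟩
  · refine Set.inter_subset_inter_left _ ?_
    intro x hx h
    exact hx (by simp [h])
  · exact (cube_finite m t).subset Set.inter_subset_right

lemma Sparse.shift {c : (Fin d → ℤ) → ℤ} (hc : Sparse c) (v : Fin d → ℤ) :
    Sparse (fun x => c (x - v)) := by
  obtain ⟨a, ha, hA⟩ := hc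
  refine ⟨a, ha, fun m hm t => ?_⟩
  have : Function.support (fun x => c (x - v)) ∩ cube m t =
      (fun x => x + v) '' (Function.support c ∩ cube m (t - v)) := by
    ext x
    simp only [Set.mem_inter_iff, Function.mem_support, cube, Set.mem_ofPred_eq, Set.mem_image]
    constructor
    · rintro ⟨h1, h2⟩
      refine ⟨x - v, ⟨h1, fun i => ?_⟩, by simp⟩
      have := h2 i
      simpa using this
    · rintro ⟨y, ⟨h1, h2⟩, rfl⟩
      refine ⟨by simpa using h1, fun i => ?_⟩
      have := h2 i
      have e : y i - (t - v) i = (y + v) i - t i := by simp; ring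
      rwa [← e]
  rw [this, Set.ncard_image_of_injective _ (add_left_injective v)]
  exact hA m hm _

lemma sparse_zero : Sparse (0 : (Fin d → ℤ) → ℤ) :=
  ⟨1, one_pos, fun m hm t => by simp⟩

lemma sparse_ind (w v : Fin d → ℤ) (hv : v ≠ 0) : Sparse (ind w v) := by
  obtain ⟨i, hi⟩ := Function.ne_iff.1 hv
  refine ⟨3, by norm_num, fun m hm t => ?_⟩
  have h1 : Set.InjOn (fun x : Fin d → ℤ => x i) (Function.support (ind w v) ∩ cube m t) := by
    rintro x ⟨hx, -⟩ y ⟨hy, -⟩ hxy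
    obtain ⟨k, rfl⟩ := Set.mem_of_indicator_ne_zero hx
    obtain ⟨k', rfl⟩ := Set.mem_of_indicator_ne_zero hy
    simp only [Pi.add_apply, Pi.smul_apply, smul_eq_mul, add_right_inj] at hxy
    rw [mul_right_cancel₀ hi hxy]
  rw [← h1.ncard_image]
  have h2 : (fun x : Fin d → ℤ => x i) '' (Function.support (ind w v) ∩ cube m t) ⊆
      Set.Icc (t i - m) (t i + m) := by
    rintro _ ⟨x, ⟨-, hx⟩, rfl⟩
    have := abs_le.1 (hx i)
    exact ⟨by simp only; linarith, by simp only; linarith⟩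
  refine (Set.ncard_le_ncard h2 (Set.finite_Icc _ _)).trans ?_
  rw [← Finset.coe_Icc, Set.ncard_coe_finset, Int.card_Icc]
  omega

lemma sparse_of_mem {l : List (Fin d → ℤ)} {g : (Fin d → ℤ) → ℤ} (hg : g ∈ fibSpan l) :
    Sparse g := by
  induction hg using Submodule.span_induction with
  | mem x h =>
    obtain ⟨w, v, hv, -, rfl⟩ := h
    exact sparse_ind w v hv
  | zero => exact sparse_zero
  | add x y _ _ hx hy => exact hx.add hy
  | smul a x _ hx => exact hx.smul a

lemma eventually_zero {l : List (Fin d → ℤ)} {g : (Fin d → ℤ) → ℤ} (hg : g ∈ fibSpan l)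
    (v : Fin d → ℤ) (hv : v ≠ 0) (hl : ∀ u ∈ l, ¬ Par v u) (x : Fin d → ℤ) :
    ∃ N : ℕ, ∀ n : ℕ, N ≤ n → g (x + n • v) = 0 := by
  induction hg using Submodule.span_induction with
  | mem g h =>
    obtain ⟨w, u, hu, ⟨u', hu', a, b, ha, hb, hab⟩, rfl⟩ := h
    by_cases hex : ∃ n : ℕ, ind w u (x + n • v) ≠ 0
    · obtain ⟨n, hn⟩ := hex
      refine ⟨n + 1, fun n' hn' => ?_⟩
      by_contra hne
      obtain ⟨k, hk⟩ := Set.mem_of_indicator_ne_zero hn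
      obtain ⟨k', hk'⟩ := Set.mem_of_indicator_ne_zero hne
      have h1 : ((n' : ℤ) - n) • v = (k' - k) • u := by
        have : (x + n' • v) - (x + n • v) = (w + k' • u) - (w + k • u) := by rw [hk, hk']
        rw [sub_smul, sub_smul, natCast_zsmul, natCast_zsmul]
        simpa using this
      have h2 : (n' : ℤ) - n ≠ 0 := by omega
      have h3 : k' - k ≠ 0 := by
        intro h
        rw [h, zero_smul, smul_eq_zero] at h1
        exact h1.elim h2 hv
      refine hl u' hu' ⟨a * (n' - n), (k' - k) * b, mul_ne_zero ha h2, mul_ne_zero h3 hb, ?_⟩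
      rw [mul_smul, h1, smul_comm, hab, ← mul_smul]
    · push Not at hex
      exact ⟨0, fun n _ => hex n⟩
  | zero => exact ⟨0, fun _ _ => rfl⟩
  | add x y _ _ hx hy =>
    obtain ⟨N, hN⟩ := hx
    obtain ⟨M, hM⟩ := hy
    exact ⟨N + M, fun n hn => by
      rw [Pi.add_apply, hN n (by omega), hM n (by omega), add_zero]⟩
  | smul a x _ hx =>
    obtain ⟨N, hN⟩ := hx
    exact ⟨N, fun n hn => by rw [Pi.smul_apply, hN n hn, smul_zero]⟩

lemma fin_cosets {c : (Fin d → ℤ) → ℤ} (hc : Sparse c) (v : Fin d → ℤ) (hv : v ≠ 0)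
    (g : (Fin d → ℤ) → ℤ) (hg : ∀ x, ∃ N : ℕ, ∀ n : ℕ, N ≤ n → c (x + n • v) = g x) :
    {q : (Fin d → ℤ) ⧸ AddSubgroup.zmultiples v | g q.out ≠ 0}.Finite := by
  obtain ⟨a, ha, hA⟩ := hc
  choose N hN using hg
  by_contra hinf
  set W : ℕ := ∑ i, (v i).natAbs with hW
  have hWi : ∀ i, |v i| ≤ W := by
    intro i
    rw [Int.abs_eq_natAbs]
    exact_mod_cast Finset.single_le_sum (f := fun i => (v i).natAbs) (fun _ _ => Nat.zero_le _)
      (Finset.mem_univ i)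
  have hW0 : 0 < W := by
    obtain ⟨i, hi⟩ := Function.ne_iff.1 hv
    have := hWi i
    have := abs_pos.2 hi
    simp only [Pi.zero_apply] at *
    omega
  obtain ⟨T, hT, hTc⟩ := Set.Infinite.exists_subset_card_eq hinf (a * W + 1)
  set X : ℕ := ∑ q ∈ T, ∑ i, (q.out i).natAbs with hX
  have hXi : ∀ q ∈ T, ∀ i, |q.out i| ≤ X := by
    intro q hq i
    rw [Int.abs_eq_natAbs]
    have h1 := Finset.single_le_sum (f := fun i => (q.out i).natAbs) (fun _ _ => Nat.zero_le _)
      (Finset.mem_univ i)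
    have h2 := Finset.single_le_sum
      (f := fun q : (Fin d → ℤ) ⧸ AddSubgroup.zmultiples v => ∑ i, (q.out i).natAbs)
      (fun _ _ => Nat.zero_le _) hq
    exact_mod_cast h1.trans h2
  set M0 : ℕ := ∑ q ∈ T, N q.out with hM0
  have hM0i : ∀ q ∈ T, N q.out ≤ M0 := fun q hq =>
    Finset.single_le_sum (f := fun q : (Fin d → ℤ) ⧸ AddSubgroup.zmultiples v => N q.out)
      (fun _ _ => Nat.zero_le _) hq
  set M : ℕ := a * (X + M0 * W) + 1 with hM
  set m : ℕ := X + (M0 + M) * W with hm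
  have hm0 : 0 < m := by positivity
  have hsub : (fun p : ((Fin d → ℤ) ⧸ AddSubgroup.zmultiples v) × ℕ => p.1.out + p.2 • v) ''
      ((T ×ˢ Finset.Ico M0 (M0 + M) : Finset _) : Set _) ⊆
      Function.support c ∩ cube m 0 := by
    rintro _ ⟨⟨q, n⟩, hp, rfl⟩
    simp only [Finset.coe_product, Set.mem_prod, Finset.mem_coe, Finset.mem_Ico] at hp
    obtain ⟨hq, hn1, hn2⟩ := hp
    refine ⟨?_, fun i => ?_⟩
    · simp only [Function.mem_support]
      rw [hN _ n ((hM0i q hq).trans hn1)]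
      exact hT hq
    · have h1 := hXi q hq i
      have h2 : |(n : ℤ) * v i| ≤ (M0 + M) * W := by
        rw [abs_mul, Nat.abs_cast]
        exact mul_le_mul (by exact_mod_cast hn2.le) (hWi i) (abs_nonneg _) (by positivity)
      have h3 := abs_add_le (q.out i) ((n : ℤ) * v i)
      beta_reduce
      rw [Pi.add_apply, Pi.smul_apply, Pi.zero_apply, sub_zero, nsmul_eq_mul, hm]
      push_cast
      linarith
  have hinj : Set.InjOn
      (fun p : ((Fin d → ℤ) ⧸ AddSubgroup.zmultiples v) × ℕ => p.1.out + p.2 • v)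
      ((T ×ˢ Finset.Ico M0 (M0 + M) : Finset _) : Set _) := by
    rintro ⟨q, n⟩ - ⟨q', n'⟩ - h
    simp only at h
    have hqq : q = q' := by
      have h2 := congrArg (fun x : Fin d → ℤ => (x : (Fin d → ℤ) ⧸ AddSubgroup.zmultiples v)) h
      have hz : ((v : Fin d → ℤ) : (Fin d → ℤ) ⧸ AddSubgroup.zmultiples v) = 0 :=
        (QuotientAddGroup.eq_zero_iff _).2 (AddSubgroup.mem_zmultiples v)
      simpa [hz] using h2
    subst hqq
    have h3 : (n : ℤ) • v = (n' : ℤ) • v := by simpa using h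
    have h4 : ((n : ℤ) - n') • v = 0 := by rw [sub_smul, h3, sub_self]
    have h5 := (smul_eq_zero.1 h4).resolve_right hv
    have : n = n' := by omega
    rw [this]
  have h1 := Set.ncard_le_ncard hsub ((cube_finite m 0).subset Set.inter_subset_right)
  rw [hinj.ncard_image, Set.ncard_coe_finset, Finset.card_product, Nat.card_Ico, hTc]
    at h1
  have h2 := h1.trans (hA m hm0 0)
  have h3 : M0 + M - M0 = M := by omega
  rw [h3, hm] at h2
  have h4 : (a * W + 1) * M = a * (M * W) + M := by ring
  have h5 : a * (X + (M0 + M) * W) = a * (X + M0 * W) + a * (M * W) := by ring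
  omega

lemma limit_mem {c : (Fin d → ℤ) → ℤ} (hc : Sparse c) (v : Fin d → ℤ) (hv : v ≠ 0)
    (l : List (Fin d → ℤ)) (hvl : v ∈ l)
    (g : (Fin d → ℤ) → ℤ) (hg : ∀ x, ∃ N : ℕ, ∀ n : ℕ, N ≤ n → c (x + n • v) = g x) :
    g ∈ fibSpan l := by
  classical
  have hfin := fin_cosets hc v hv g hg
  have hper : ∀ x, g (x + v) = g x := by
    intro x
    obtain ⟨N, hN⟩ := hg x
    obtain ⟨M, hM⟩ := hg (x + v)
    rw [← hN (N + M + 1) (by omega), ← hM (N + M) (by omega)]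
    congr 1
    rw [add_smul (N + M) 1, one_smul]
    abel
  have hperz : ∀ (k : ℤ) x, g (x + k • v) = g x := by
    intro k
    induction k using Int.induction_on with
    | zero => intro x; simp
    | succ k ih => intro x; rw [add_smul, one_smul, ← add_assoc, hper, ih]
    | pred k ih =>
      intro x
      rw [sub_smul, one_smul, ← hper, ← ih x]
      congr 1
      abel
  have hmk : ∀ (x : Fin d → ℤ) (q : (Fin d → ℤ) ⧸ AddSubgroup.zmultiples v),
      (∃ k : ℤ, x = q.out + k • v) ↔ (x : (Fin d → ℤ) ⧸ AddSubgroup.zmultiples v) = q := by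
    intro x q
    conv_rhs => rw [← QuotientAddGroup.out_eq' q, eq_comm, QuotientAddGroup.eq,
      AddSubgroup.mem_zmultiples_iff]
    refine exists_congr fun k => ?_
    constructor
    · rintro rfl; abel
    · intro h; rw [h]; abel
  have key : g = ∑ q ∈ hfin.toFinset, g q.out • ind q.out v := by
    funext x
    have hx : g x = g (x : (Fin d → ℤ) ⧸ AddSubgroup.zmultiples v).out := by
      obtain ⟨k, hk⟩ := (hmk x x).2 rfl
      conv_lhs => rw [hk]
      exact hperz _ _
    have e : ∀ q : (Fin d → ℤ) ⧸ AddSubgroup.zmultiples v, ind q.out v x =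
        if (x : (Fin d → ℤ) ⧸ AddSubgroup.zmultiples v) = q then 1 else 0 := by
      intro q
      simp only [ind, Set.indicator_apply, Set.mem_ofPred_eq, hmk, Pi.one_apply]
    simp only [Finset.sum_apply, Pi.smul_apply, e, smul_eq_mul, mul_ite, mul_one, mul_zero,
      Finset.sum_ite_eq, Set.Finite.mem_toFinset, Set.mem_ofPred_eq]
    rw [hx]
    split_ifs with h
    · rfl
    · push Not at h
      exact h
  rw [key]
  refine Submodule.sum_mem _ fun q _ => Submodule.smul_mem _ _ (Submodule.subset_span ?_)
  exact ⟨q.out, v, hv, ⟨v, hvl, 1, 1, one_ne_zero, one_ne_zero, rfl⟩, rfl⟩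

lemma dvd_zsmul (u : Fin d → ℤ) (a : ℤ) : (mon u - 1) ∣ (mon (a • u) - 1) := by
  have hn : ∀ n : ℕ, (mon u - 1) ∣ (mon (n • u) - 1) := by
    intro n
    rw [mon_nsmul]
    simpa using sub_dvd_pow_sub_pow (mon u) 1 n
  obtain ⟨n, rfl | rfl⟩ := a.eq_nat_or_neg
  · simpa using hn n
  · obtain ⟨q, hq⟩ := hn n
    refine ⟨-mon (-(n • u)) * q, ?_⟩
    have : mon (-(n • u)) * mon (n • u) = 1 := by
      rw [← mon_add, neg_add_cancel, mon_zero]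
    rw [neg_smul, natCast_zsmul]
    linear_combination -mon (-(n • u)) * hq + this

lemma bdd_sq {h : (Fin d → ℤ) → ℤ} (hb : Bdd h) (V : Fin d → ℤ)
    (h2 : act (mon V - 1) (act (mon V - 1) h) = 0) : act (mon V - 1) h = 0 := by
  obtain ⟨B, hB⟩ := hb
  set g := act (mon V - 1) h with hg
  have hper : ∀ x, g (x - V) = g x := by
    intro x
    have := congrFun h2 x
    rw [act_mon_sub_one] at this
    simpa [sub_eq_zero] using this
  have hgx : ∀ x, h (x - V) = h x + g x := by
    intro x
    rw [hg, act_mon_sub_one]; ring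
  have hlin : ∀ n : ℕ, ∀ x, h (x - n • V) = h x + n * g x := by
    intro n
    induction n with
    | zero => intro x; simp
    | succ n ih =>
      intro x
      have : x - (n + 1) • V = (x - V) - n • V := by rw [add_smul, one_smul]; abel
      rw [this, ih, hgx, hper]
      push_cast; ring
  funext x
  by_contra hne
  have h3 := hlin (2 * B + 1).toNat x
  have hB0 : 0 ≤ B := (abs_nonneg _).trans (hB x)
  rw [Int.toNat_of_nonneg (by linarith)] at h3
  have h4 := hB x
  have h5 := hB (x - (2 * B + 1).toNat • V)
  rw [h3] at h5
  have h6 : 1 ≤ |g x| := Int.one_le_abs hne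
  have h7 : |(2 * B + 1) * g x| ≤ 2 * B := by
    have := abs_sub (h x + (2 * B + 1) * g x) (h x)
    rw [add_sub_cancel_left] at this
    linarith
  rw [abs_mul, abs_of_pos (by linarith)] at h7
  nlinarith

theorem main_aux (n : ℕ) : ∀ l : List (Fin d → ℤ), l.length = n → (∀ v ∈ l, v ≠ 0) →
    ∀ c : (Fin d → ℤ) → ℤ, Sparse c → Bdd c → act ((l.map fun v => mon v - 1).prod) c = 0 →
    c ∈ fibSpan l := by
  induction n with
  | zero =>
    intro l hl _ c _ _ h
    rw [List.length_eq_zero_iff] at hl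
    subst hl
    have : c = 0 := by simpa using h
    rw [this]
    exact Submodule.zero_mem _
  | succ n ih =>
    intro l hl hl0 c hs hb h
    obtain ⟨v, l, rfl⟩ := List.exists_cons_of_length_eq_add_one hl
    have hlen : l.length = n := by simpa using hl
    have hv : v ≠ 0 := hl0 v (by simp)
    have hl1 : ∀ u ∈ l, u ≠ 0 := fun u hu => hl0 u (by simp [hu])
    by_cases hpar : ∃ u ∈ l, Par v u
    · obtain ⟨u, hu, a, b, ha, hb0, hab⟩ := hpar
      have hperm := List.perm_cons_erase hu
      have hlen' : (a • v :: l.erase u).length = n := by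
        rw [← hlen, hperm.length_eq]; simp
      have hmono : fibSpan (a • v :: l.erase u) ≤ fibSpan (v :: l) := by
        refine Submodule.span_mono ?_
        rintro g ⟨w, x, hx, ⟨y, hy, hxy⟩, rfl⟩
        refine ⟨w, x, hx, ?_, rfl⟩
        rcases List.mem_cons.1 hy with rfl | hy
        · obtain ⟨a', b', ha', hb', h'⟩ := hxy
          exact ⟨v, by simp, a', b' * a, ha', mul_ne_zero hb' ha, by rw [h', mul_smul]⟩
        · exact ⟨y, by simp [List.mem_of_mem_erase hy], hxy⟩
      apply hmono
      refine ih _ hlen' ?_ c hs hb ?_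
      · intro x hx
        rcases List.mem_cons.1 hx with rfl | hx
        · exact smul_ne_zero ha hv
        · exact hl1 x (List.mem_of_mem_erase hx)
      · set Q := ((l.erase u).map fun v => mon v - 1).prod with hQ
        have e1 : ((v :: l).map fun v => mon v - 1).prod = (mon v - 1) * ((mon u - 1) * Q) := by
          rw [List.map_cons, List.prod_cons, (hperm.map _).prod_eq, List.map_cons, List.prod_cons]
        rw [e1] at h
        rw [List.map_cons, List.prod_cons, act_mul, ← hQ]
        apply bdd_sq (hb.act Q)
        obtain ⟨q1, hq1⟩ := dvd_zsmul v a
        obtain ⟨q2, hq2⟩ := dvd_zsmul u b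
        rw [← hab] at hq2
        rw [← act_mul, ← act_mul, mul_assoc]
        have e2 : (mon (a • v) - 1) * ((mon (a • v) - 1) * Q) =
            (q1 * q2) * ((mon v - 1) * ((mon u - 1) * Q)) := by
          nth_rewrite 1 [hq1]
          rw [hq2]
          ring
        rw [e2, act_mul, h, map_zero]
    · push Not at hpar
      set Q := (l.map fun v => mon v - 1).prod with hQ
      rw [List.map_cons, List.prod_cons, ← hQ] at h
      have hmono : fibSpan l ≤ fibSpan (v :: l) := by
        refine Submodule.span_mono ?_
        rintro g ⟨w, x, hx, ⟨y, hy, hxy⟩, rfl⟩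
        exact ⟨w, x, hx, ⟨y, by simp [hy], hxy⟩, rfl⟩
      have hDs : Sparse (act (mon v - 1) c) := by
        have : act (mon v - 1) c = (fun x => c (x - v)) + (-1 : ℤ) • c := by
          funext x; rw [act_mon_sub_one]; simp; ring
        rw [this]
        exact (hs.shift v).add (hs.smul _)
      have hD := ih l hlen hl1 (act (mon v - 1) c) hDs (hb.act _)
        (by rw [← act_mul, mul_comm]; exact h)
      have hlim : ∀ x, ∃ y, ∃ N : ℕ, ∀ n : ℕ, N ≤ n → c (x + n • v) = y := by
        intro x
        obtain ⟨N, hN⟩ := eventually_zero hD v hv hpar x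
        refine ⟨c (x + N • v), N, fun n hn => ?_⟩
        induction n, hn using Nat.le_induction with
        | base => rfl
        | succ n hn ih2 =>
          have h1 := hN (n + 1) (by omega)
          rw [act_mon_sub_one, add_smul, one_smul, ← add_assoc, add_sub_cancel_right] at h1
          rw [add_smul, one_smul, ← add_assoc, ← ih2]
          linarith
      choose g hg using hlim
      have hgmem : g ∈ fibSpan (v :: l) := limit_mem hs v hv _ (by simp) g hg
      have hgb : Bdd ((-1 : ℤ) • g) := by
        obtain ⟨B, hB⟩ := hb
        refine ⟨B, fun x => ?_⟩
        obtain ⟨N, hN⟩ := hg x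
        have := hB (x + N • v)
        rw [hN N le_rfl] at this
        simpa using this
      have hper : ∀ x, g (x + v) = g x := by
        intro x
        obtain ⟨N, hN⟩ := hg x
        obtain ⟨M, hM⟩ := hg (x + v)
        rw [← hN (N + M + 1) (by omega), ← hM (N + M) (by omega)]
        congr 1
        rw [add_smul (N + M) 1, one_smul]
        abel
      have hpern : ∀ (n : ℕ) x, g (x + n • v) = g x := by
        intro n
        induction n with
        | zero => intro x; simp
        | succ n ih2 => intro x; rw [add_smul, one_smul, ← add_assoc, hper, ih2]
      set c' := c + (-1 : ℤ) • g with hc'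
      have hz : ∀ x, ∃ N : ℕ, ∀ n : ℕ, N ≤ n → c' (x + n • v) = 0 := by
        intro x
        obtain ⟨N, hN⟩ := hg x
        refine ⟨N, fun n hn => ?_⟩
        rw [hc', Pi.add_apply, Pi.smul_apply, hN n hn, hpern]
        simp
      have hzact : ∀ p : AddMonoidAlgebra ℤ (Fin d → ℤ), ∀ x, ∃ N : ℕ, ∀ n : ℕ, N ≤ n →
          act p c' (x + n • v) = 0 := by
        intro p x
        induction p using AddMonoidAlgebra.induction_linear with
        | zero => exact ⟨0, fun n _ => by simp⟩
        | add p q hp hq =>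
          obtain ⟨N, hN⟩ := hp
          obtain ⟨M, hM⟩ := hq
          refine ⟨N + M, fun n hn => ?_⟩
          rw [map_add act, LinearMap.add_apply, Pi.add_apply, hN n (by omega), hM n (by omega), add_zero]
        | single u a =>
          obtain ⟨N, hN⟩ := hz (x - u)
          refine ⟨N, fun n hn => ?_⟩
          rw [act_single, add_sub_right_comm, hN n hn, mul_zero]
      have hgD : act (mon v - 1) g = 0 := by
        funext x
        rw [act_mon_sub_one]
        have := hper (x - v)
        rw [sub_add_cancel] at this
        simp [this]
      have hc'D : act (mon v - 1) (act Q c') = 0 := by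
        rw [← act_mul, hc', map_add, h, map_smul, mul_comm, act_mul, hgD]
        simp
      have hQ0 : act Q c' = 0 := by
        funext x
        have hp1 : ∀ x, act Q c' (x + v) = act Q c' x := by
          intro x
          have := congrFun hc'D (x + v)
          rw [act_mon_sub_one, add_sub_cancel_right] at this
          simp only [Pi.zero_apply] at this
          linarith
        have hpn : ∀ (n : ℕ) x, act Q c' (x + n • v) = act Q c' x := by
          intro n
          induction n with
          | zero => intro x; simp
          | succ n ih2 => intro x; rw [add_smul, one_smul, ← add_assoc, hp1, ih2]
        obtain ⟨N, hN⟩ := hzact Q x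
        rw [← hpn N x, hN N le_rfl]
        rfl
      have hc'mem := hmono (ih l hlen hl1 c' (hs.add ((sparse_of_mem hgmem).smul _))
        (hb.add hgb) hQ0)
      have : c = c' + g := by
        rw [hc']; funext x; simp
      rw [this]
      exact Submodule.add_mem _ hc'mem hgmem

end Geometry

/-- A sparse configuration with a non-trivial annihilator is a finite sum of
periodic fibers. -/
theorem sparse_with_annihilator_is_sum_of_periodic_fibers
    {d : ℕ} (c : (Fin d → ℤ) → ℤ) (hconf : (Set.range c).Finite) (hsparse : Sparse c)
    (f : (Fin d → ℤ) → ℤ) (hf : IsPoly f) (hf0 : f ≠ 0) (hann : polyApply f c = 0) :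
    ∃ (r : ℕ) (e : Fin r → ((Fin d → ℤ) → ℤ)) (v : Fin r → (Fin d → ℤ)),
      c = ∑ j, e j ∧
      ∀ j, v j ≠ 0 ∧ IsFiber (e j) (v j) ∧ ∃ w : Fin d → ℤ, w ≠ 0 ∧ Periodic (e j) w := by
  have hb : Bdd c := by
    obtain ⟨B, hB⟩ := (hconf.image (fun z : ℤ => |z|)).bddAbove
    exact ⟨B, fun x => hB ⟨c x, ⟨x, rfl⟩, rfl⟩⟩
  obtain ⟨v0, hv0⟩ := Function.ne_iff.1 hf0
  obtain ⟨B, hB⟩ := id hb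
  have h1 : act (pol hf.toFinset f 1) c = 0 := by
    funext x
    rw [act_pol, ← hann, polyApply, finsum_eq_sum_of_support_subset (s := hf.toFinset)]
    · simp
    · intro y hy
      simp only [Function.mem_support] at hy
      exact hf.mem_toFinset.2 (left_ne_zero_of_mul hy)
  obtain ⟨l, hl, hlc⟩ := exists_diff_ann hf.toFinset f c B hB h1 v0
    (hf.mem_toFinset.2 hv0) hv0 (fun n v hn hv => smul_ne_zero hn hv)
  have hmem := main_aux l.length l rfl hl c hsparse hb hlc
  obtain ⟨r, a, e, he⟩ := Submodule.mem_span_set'.1 hmem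
  choose w v hv hp hev using fun i => (e i).2
  refine ⟨r, fun i => a i • (e i : (Fin d → ℤ) → ℤ), v, he.symm, fun j => ⟨hv j, ⟨w j, ?_⟩, v j,
    hv j, ?_⟩⟩
  · intro x hx
    simp only [hev, Function.mem_support, Pi.smul_apply] at hx
    have hx' : ind (w j) (v j) x ≠ 0 := right_ne_zero_of_mul hx
    obtain ⟨k, rfl⟩ := Set.mem_of_indicator_ne_zero hx'
    refine ⟨k, ?_⟩
    funext i
    simp [intVecQ]
  · intro x
    simp only [hev, Pi.smul_apply]
    congr 1
    have : (∃ k : ℤ, x + v j = w j + k • v j) ↔ ∃ k : ℤ, x = w j + k • v j := by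
      constructor
      · rintro ⟨k, hk⟩
        refine ⟨k - 1, ?_⟩
        rw [sub_smul, one_smul, ← add_sub_assoc, ← hk, add_sub_cancel_right]
      · rintro ⟨k, hk⟩
        exact ⟨k + 1, by rw [hk, add_smul, one_smul, add_assoc]⟩
    classical
    simp only [ind, Set.indicator_apply, Set.mem_ofPred_eq, this, Pi.one_apply]

end PaperFormal
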